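/- Let f : [-π,π] → ℂ^{s×t} belong to L¹([-π,π]; ℂ^{s×t}). Then the sequence of block Toeplitz matrices {T_n(f)}_n satisfies {T_n(f)}_n ∼_σ f. -/

import Mathlib

open MeasureTheory Filter Topology Matrix
open scoped Real

noncomputable section

/-- Sum of `F` over the eigenvalues (with multiplicity) of a square complex matrix,
the eigenvalues being the roots of the characteristic polynomial. -/
def eigSum {ι : Type*} [Fintype ι] [DecidableEq ι] (F : ℂ → ℂ) (A : Matrix ι ι ℂ) : ℂ :=
  (A.charpoly.roots.map F).sum

/-- Sum of `F` over the singular values `σ_1, …, σ_{min(#rows,#cols)}` of a rectangular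
complex matrix: the singular values are the square roots of the eigenvalues of `A * Aᴴ`,
discarding the `#rows - min(#rows,#cols)` superfluous zero ones. -/
def svSum {m n : Type*} [Fintype m] [Fintype n] [DecidableEq m]
    (F : ℝ → ℂ) (A : Matrix m n ℂ) : ℂ :=
  (∑ i, F (Real.sqrt ((Matrix.isHermitian_mul_conjTranspose_self A).eigenvalues i))) -
    ((Fintype.card m - min (Fintype.card m) (Fintype.card n) : ℕ) : ℂ) * F 0

/-- `{A_n}_n ∼_σ f` : the matrix-sequence `A` is distributed as the matrix-valued
symbol `f : Ω → ℂ^{ρ×τ}` in the sense of the singular values (Weyl sense). -/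
def DistributedSV {Θ : Type*} [MeasureSpace Θ] (Ω : Set Θ)
    {ρ τ : Type*} [Fintype ρ] [Fintype τ] [DecidableEq ρ]
    (f : Θ → Matrix ρ τ ℂ)
    {ι κ : ℕ → Type} [∀ n, Fintype (ι n)] [∀ n, Fintype (κ n)] [∀ n, DecidableEq (ι n)]
    (A : ∀ n, Matrix (ι n) (κ n) ℂ) : Prop :=
  ∀ F : ℝ → ℂ, Continuous F → HasCompactSupport F →
    Tendsto
      (fun n => ((min (Fintype.card (ι n)) (Fintype.card (κ n)) : ℕ) : ℂ)⁻¹ * svSum F (A n))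
      atTop
      (𝓝 (((volume Ω).toReal : ℂ)⁻¹ *
        ∫ θ in Ω, ((min (Fintype.card ρ) (Fintype.card τ) : ℕ) : ℂ)⁻¹ * svSum F (f θ)))

/-- `{A_n}_n ∼_λ f` : the matrix-sequence `A` is distributed as the matrix-valued
symbol `f : Ω → ℂ^{ρ×ρ}` in the sense of the eigenvalues (Weyl sense). -/
def DistributedEig {Θ : Type*} [MeasureSpace Θ] (Ω : Set Θ)
    {ρ : Type*} [Fintype ρ] [DecidableEq ρ]
    (f : Θ → Matrix ρ ρ ℂ)
    {ι : ℕ → Type} [∀ n, Fintype (ι n)] [∀ n, DecidableEq (ι n)]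
    (A : ∀ n, Matrix (ι n) (ι n) ℂ) : Prop :=
  ∀ F : ℂ → ℂ, Continuous F → HasCompactSupport F →
    Tendsto (fun n => ((Fintype.card (ι n) : ℕ) : ℂ)⁻¹ * eigSum F (A n)) atTop
      (𝓝 (((volume Ω).toReal : ℂ)⁻¹ *
        ∫ θ in Ω, ((Fintype.card ρ : ℕ) : ℂ)⁻¹ * eigSum F (f θ)))

/-- `{A_n}_n ∼_σ α I` (constant symbol `α I_s`, `α = 0` being the notion of a
zero-distributed matrix-sequence): the limit of the singular value averages is `F(α)`. -/
def DistributedSVConst (α : ℝ)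
    {ι κ : ℕ → Type} [∀ n, Fintype (ι n)] [∀ n, Fintype (κ n)] [∀ n, DecidableEq (ι n)]
    (A : ∀ n, Matrix (ι n) (κ n) ℂ) : Prop :=
  ∀ F : ℝ → ℂ, Continuous F → HasCompactSupport F →
    Tendsto
      (fun n => ((min (Fintype.card (ι n)) (Fintype.card (κ n)) : ℕ) : ℂ)⁻¹ * svSum F (A n))
      atTop (𝓝 (F α))

/-- `{A_n}_n ∼_λ α I` (constant symbol `α I_s`, `α` real): the limit of the eigenvalue
averages is `F(α)`. -/
def DistributedEigConst (α : ℝ)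
    {ι : ℕ → Type} [∀ n, Fintype (ι n)] [∀ n, DecidableEq (ι n)]
    (A : ∀ n, Matrix (ι n) (ι n) ℂ) : Prop :=
  ∀ F : ℂ → ℂ, Continuous F → HasCompactSupport F →
    Tendsto (fun n => ((Fintype.card (ι n) : ℕ) : ℂ)⁻¹ * eigSum F (A n)) atTop
      (𝓝 (F (α : ℂ)))

/-- The `k`-th Fourier coefficient (computed entrywise) of a matrix-valued function on
`[-π, π]`: `f̂_k = (1/2π) ∫_{-π}^{π} f(θ) e^{-ικθ} dθ`. -/
def fCoeff {ρ τ : Type*} (f : ℝ → Matrix ρ τ ℂ) (k : ℤ) : Matrix ρ τ ℂ :=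
  Matrix.of fun a b =>
    ((2 * π : ℝ) : ℂ)⁻¹ *
      ∫ θ in (-π : ℝ)..π, f θ a b * Complex.exp (-(Complex.I * (k : ℂ) * (θ : ℂ)))

/-- The (rectangular) block Toeplitz matrix `T_{n,n'}(f) = [f̂_{i-j}]`, of size
`sn × tn'` when `f` is `s × t` matrix-valued. -/
def blockToeplitz {ρ τ : Type*} (f : ℝ → Matrix ρ τ ℂ) (n n' : ℕ) :
    Matrix (Fin n × ρ) (Fin n' × τ) ℂ :=
  Matrix.of fun p q => fCoeff f (((p.1 : ℕ) : ℤ) - ((q.1 : ℕ) : ℤ)) p.2 q.2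

/-!
The singular values of `A` enter through the Gram resolvent `R(A) = (1 + A Aᴴ)⁻¹`, whose eigenvalues
`(1 + σ²)⁻¹` lie in `[0, 1]`. By Weierstrass approximation the distribution is therefore determined
by the limits of the moments `n⁻¹ tr R(T_n(f)) ^ k`.

For a bounded symbol `g`, the difference `T_n(f) T_n(g) - T_n(f g)` has trace norm `o(n)`: if `f` is
a character it has bounded rank and norm, and `‖T_n(f)‖₁ ≤ n ‖f‖₁` together with
`‖T_n(g)‖ ≤ ‖g‖_∞` extends this to `f ∈ L¹` by density of the trigonometric polynomials. Since
`R(f)`, `R(f) f` and their products are bounded even though `f` is not, induction on `k` shows that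
`R(T_n(f)) ^ k` and `T_n(R(f) ^ k)` agree up to trace norm `o(n)`, and the trace of the latter is
exactly `n` times the mean of `tr R(f) ^ k`.
-/

section OperatorNorm

open scoped Matrix.Norms.L2Operator

variable {k l m n : Type*} [Fintype k] [Fintype l] [Fintype m] [Fintype n] [DecidableEq n]

lemma l2_opNorm_one_le : ‖(1 : Matrix n n ℂ)‖ ≤ 1 := by
  rw [← diagonal_one, l2_opNorm_diagonal]
  exact (pi_norm_le_iff_of_nonneg zero_le_one).2 fun _ => norm_one.le

lemma l2_opNorm_mul_conjTranspose_self [DecidableEq m] (A : Matrix m n ℂ) :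
    ‖A * Aᴴ‖ = ‖A‖ * ‖A‖ := by
  simpa [l2_opNorm_conjTranspose] using l2_opNorm_conjTranspose_mul_self Aᴴ

lemma l2_opNorm_one_submatrix_le [DecidableEq m] {e : l → m} (he : e.Injective) :
    ‖(1 : Matrix m m ℂ).submatrix e id‖ ≤ 1 := by
  classical
  have h : (1 : Matrix m m ℂ).submatrix e id * ((1 : Matrix m m ℂ).submatrix e id)ᴴ = 1 := by
    rw [conjTranspose_submatrix, conjTranspose_one,
      ← submatrix_mul _ _ e id e Function.bijective_id, one_mul, submatrix_one _ he]
  have hsq := l2_opNorm_mul_conjTranspose_self ((1 : Matrix m m ℂ).submatrix e id)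
  rw [h] at hsq
  exact (sq_le_one_iff₀ (norm_nonneg _)).1 (by rw [sq, ← hsq]; exact l2_opNorm_one_le)

lemma l2_opNorm_submatrix_le [DecidableEq k] (A : Matrix m n ℂ) {e : l → m} {f : k → n}
    (he : e.Injective) (hf : f.Injective) : ‖A.submatrix e f‖ ≤ ‖A‖ := by
  classical
  have hA : A.submatrix e f =
      (1 : Matrix m m ℂ).submatrix e id * A * ((1 : Matrix n n ℂ).submatrix f id)ᴴ := by
    ext i j
    simp [mul_apply, one_apply]
  calc ‖A.submatrix e f‖
      ≤ ‖(1 : Matrix m m ℂ).submatrix e id‖ * ‖A‖ * ‖((1 : Matrix n n ℂ).submatrix f id)ᴴ‖ := by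
        rw [hA]
        exact (l2_opNorm_mul _ _).trans (by gcongr; exact l2_opNorm_mul _ _)
    _ ≤ 1 * ‖A‖ * 1 := by
        rw [l2_opNorm_conjTranspose]
        gcongr
        exacts [l2_opNorm_one_submatrix_le he, l2_opNorm_one_submatrix_le hf]
    _ = ‖A‖ := by ring

lemma norm_star_dotProduct_mulVec_le (A : Matrix m n ℂ) (x : EuclideanSpace ℂ n)
    (y : EuclideanSpace ℂ m) : ‖star y.ofLp ⬝ᵥ A *ᵥ x.ofLp‖ ≤ ‖A‖ * ‖x‖ * ‖y‖ := by
  calc ‖star y.ofLp ⬝ᵥ A *ᵥ x.ofLp‖ = ‖inner ℂ y (WithLp.toLp 2 (A *ᵥ x.ofLp))‖ := by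
        rw [EuclideanSpace.inner_eq_star_dotProduct, dotProduct_comm]
    _ ≤ ‖y‖ * ‖WithLp.toLp 2 (A *ᵥ x.ofLp)‖ := norm_inner_le_norm _ _
    _ ≤ ‖y‖ * (‖A‖ * ‖x‖) := by gcongr; exact l2_opNorm_mulVec A x
    _ = ‖A‖ * ‖x‖ * ‖y‖ := by ring

lemma l2_opNorm_le_of_dotProduct_mulVec_le {A : Matrix m n ℂ} {C : ℝ} (hC : 0 ≤ C)
    (h : ∀ (x : EuclideanSpace ℂ n) (y : EuclideanSpace ℂ m), ‖x‖ = 1 → ‖y‖ = 1 →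
      ‖star y.ofLp ⬝ᵥ A *ᵥ x.ofLp‖ ≤ C) : ‖A‖ ≤ C := by
  rw [l2_opNorm_def]
  refine ContinuousLinearMap.opNorm_le_of_re_inner_le hC fun x y hx hy => ?_
  calc _ ≤ ‖inner ℂ (WithLp.toLp 2 (A *ᵥ x.ofLp)) y‖ := RCLike.re_le_norm _
    _ = ‖star y.ofLp ⬝ᵥ A *ᵥ x.ofLp‖ := by
      rw [norm_inner_symm, EuclideanSpace.inner_eq_star_dotProduct, dotProduct_comm]
    _ ≤ C := h x y hx hy

lemma norm_apply_le_l2_opNorm (A : Matrix m n ℂ) (i : m) (j : n) : ‖A i j‖ ≤ ‖A‖ := by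
  classical
  simpa [dotProduct, mulVec, Pi.single_apply] using
    norm_star_dotProduct_mulVec_le A (EuclideanSpace.single j 1) (EuclideanSpace.single i 1)

end OperatorNorm

section TraceNorm

open scoped Matrix.Norms.L2Operator

variable {l m n : Type*} [Fintype l] [Fintype m] [Fintype n] [DecidableEq l] [DecidableEq m]

/-- The trace norm (Schatten 1-norm) of a complex matrix, encoded by duality as the norm of the
linear functional `X ↦ tr (A X)` with respect to the operator norm. -/
def traceNorm (A : Matrix m n ℂ) : ℝ :=
  ‖((traceLinearMap m ℂ ℂ).comp (mulLeftLinearMap m ℂ A)).toContinuousLinearMap‖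

lemma traceNorm_nonneg (A : Matrix m n ℂ) : 0 ≤ traceNorm A :=
  ContinuousLinearMap.opNorm_nonneg _

lemma norm_trace_mul_le (A : Matrix m n ℂ) (X : Matrix n m ℂ) :
    ‖(A * X).trace‖ ≤ traceNorm A * ‖X‖ :=
  ((traceLinearMap m ℂ ℂ).comp (mulLeftLinearMap m ℂ A)).toContinuousLinearMap.le_opNorm X

lemma norm_trace_le_traceNorm (A : Matrix m m ℂ) : ‖A.trace‖ ≤ traceNorm A := by
  calc ‖A.trace‖ = ‖(A * 1).trace‖ := by rw [mul_one]
    _ ≤ traceNorm A * ‖(1 : Matrix m m ℂ)‖ := norm_trace_mul_le A 1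
    _ ≤ traceNorm A := mul_le_of_le_one_right (traceNorm_nonneg A) l2_opNorm_one_le

lemma traceNorm_le {A : Matrix m n ℂ} {C : ℝ} (hC : 0 ≤ C)
    (h : ∀ X : Matrix n m ℂ, ‖(A * X).trace‖ ≤ C * ‖X‖) : traceNorm A ≤ C :=
  ContinuousLinearMap.opNorm_le_bound _ hC h

@[simp]
lemma traceNorm_zero : traceNorm (0 : Matrix m n ℂ) = 0 :=
  le_antisymm (traceNorm_le le_rfl fun X => by simp) (traceNorm_nonneg _)

lemma traceNorm_add_le (A B : Matrix m n ℂ) : traceNorm (A + B) ≤ traceNorm A + traceNorm B :=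
  traceNorm_le (add_nonneg (traceNorm_nonneg A) (traceNorm_nonneg B)) fun X => by
    rw [Matrix.add_mul, trace_add, _root_.add_mul]
    exact norm_add_le_of_le (norm_trace_mul_le A X) (norm_trace_mul_le B X)

lemma traceNorm_smul_le (c : ℂ) (A : Matrix m n ℂ) : traceNorm (c • A) ≤ ‖c‖ * traceNorm A :=
  traceNorm_le (mul_nonneg (norm_nonneg c) (traceNorm_nonneg A)) fun X => by
    rw [Matrix.smul_mul, trace_smul, norm_smul, mul_assoc]
    gcongr
    exact norm_trace_mul_le A X

lemma traceNorm_neg (A : Matrix m n ℂ) : traceNorm (-A) = traceNorm A := by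
  have h (B : Matrix m n ℂ) : traceNorm (-B) ≤ traceNorm B := by
    simpa using traceNorm_smul_le (-1) B
  exact le_antisymm (h A) (by simpa using h (-A))

lemma traceNorm_sum_le {α : Type*} (s : Finset α) (A : α → Matrix m n ℂ) :
    traceNorm (∑ a ∈ s, A a) ≤ ∑ a ∈ s, traceNorm (A a) :=
  Finset.le_sum_of_subadditive traceNorm traceNorm_zero.le traceNorm_add_le s A

lemma traceNorm_mul_le_left (A : Matrix l m ℂ) (B : Matrix m n ℂ) :
    traceNorm (A * B) ≤ ‖A‖ * traceNorm B :=
  traceNorm_le (mul_nonneg (norm_nonneg A) (traceNorm_nonneg B)) fun X => by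
    calc ‖(A * B * X).trace‖ = ‖(B * (X * A)).trace‖ := by
          rw [Matrix.mul_assoc, trace_mul_comm, Matrix.mul_assoc]
      _ ≤ traceNorm B * (‖X‖ * ‖A‖) :=
          (norm_trace_mul_le B _).trans (by gcongr; exacts [traceNorm_nonneg B, l2_opNorm_mul X A])
      _ = ‖A‖ * traceNorm B * ‖X‖ := by ring

lemma traceNorm_mul_le_right {k : Type*} [Fintype k] [DecidableEq k] (A : Matrix m n ℂ)
    (B : Matrix n k ℂ) : traceNorm (A * B) ≤ traceNorm A * ‖B‖ :=
  traceNorm_le (mul_nonneg (traceNorm_nonneg A) (norm_nonneg B)) fun X => by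
    calc ‖(A * B * X).trace‖ = ‖(A * (B * X)).trace‖ := by rw [Matrix.mul_assoc]
      _ ≤ traceNorm A * (‖B‖ * ‖X‖) :=
          (norm_trace_mul_le A _).trans (by gcongr; exacts [traceNorm_nonneg A, l2_opNorm_mul B X])
      _ = traceNorm A * ‖B‖ * ‖X‖ := by ring

lemma traceNorm_diagonal_le (d : m → ℂ) : traceNorm (diagonal d) ≤ ∑ i, ‖d i‖ :=
  traceNorm_le (by positivity) fun X => by
    simp only [trace, diag_apply, diagonal_mul, Finset.sum_mul]
    refine norm_sum_le_of_le _ fun i _ => ?_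
    rw [norm_mul]
    gcongr
    exact norm_apply_le_l2_opNorm X i i

lemma traceNorm_le_sum_blocks {ρ τ : Type*} [Fintype ρ] [Fintype τ] [DecidableEq ρ]
    (A : Matrix (m × ρ) (n × τ) ℂ) :
    traceNorm A ≤ ∑ a, ∑ b, traceNorm (A.submatrix (·, a) (·, b)) := by
  classical
  have hC : 0 ≤ ∑ a, ∑ b, traceNorm (A.submatrix (·, a) (·, b)) :=
    Finset.sum_nonneg fun _ _ => Finset.sum_nonneg fun _ _ => traceNorm_nonneg _
  refine traceNorm_le hC fun X => ?_
  have hblocks : (A * X).trace =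
      ∑ a, ∑ b, (A.submatrix (·, a) (·, b) * X.submatrix (·, b) (·, a)).trace := by
    simp only [trace, diag_apply, mul_apply, submatrix_apply, Fintype.sum_prod_type]
    rw [Finset.sum_comm]
    exact Finset.sum_congr rfl fun a _ => Finset.sum_comm_cycle
  simp only [hblocks, Finset.sum_mul]
  refine norm_sum_le_of_le _ fun a _ => norm_sum_le_of_le _ fun b _ => ?_
  refine (norm_trace_mul_le _ _).trans ?_
  gcongr
  exacts [traceNorm_nonneg _,
    l2_opNorm_submatrix_le X (Prod.mk_left_injective b) (Prod.mk_left_injective a)]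

end TraceNorm

section TraceNegligible

open scoped Matrix.Norms.L2Operator

/-- A sequence of matrices is trace-negligible if its trace norms are `o(n)`; for matrices of size
proportional to `n` this means that it does not contribute to averages over the spectrum. -/
def IsTraceNegligible {ι κ : ℕ → Type*} [∀ n, Fintype (ι n)] [∀ n, Fintype (κ n)]
    [∀ n, DecidableEq (ι n)] (A : ∀ n, Matrix (ι n) (κ n) ℂ) : Prop :=
  (fun n => traceNorm (A n)) =o[atTop] fun n : ℕ => (n : ℝ)

namespace IsTraceNegligible

variable {ι κ ν : ℕ → Type*} [∀ n, Fintype (ι n)] [∀ n, Fintype (κ n)] [∀ n, Fintype (ν n)]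
  [∀ n, DecidableEq (ι n)] {A B : ∀ n, Matrix (ι n) (κ n) ℂ}

lemma of_le {u : ℕ → ℝ} (hu : u =o[atTop] fun n : ℕ => (n : ℝ)) (h : ∀ n, traceNorm (A n) ≤ u n) :
    IsTraceNegligible A := by
  refine (Asymptotics.IsBigO.of_norm_le fun n => ?_).trans_isLittleO hu
  rw [Real.norm_of_nonneg (traceNorm_nonneg _)]
  exact h n

lemma of_le_const {C : ℝ} (h : ∀ n, traceNorm (A n) ≤ C) : IsTraceNegligible A :=
  of_le ((Asymptotics.isLittleO_const_id_atTop C).comp_tendsto tendsto_natCast_atTop_atTop) h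

lemma zero : IsTraceNegligible (fun n => (0 : Matrix (ι n) (κ n) ℂ)) :=
  of_le_const fun _ => traceNorm_zero.le

lemma add (hA : IsTraceNegligible A) (hB : IsTraceNegligible B) :
    IsTraceNegligible (fun n => A n + B n) :=
  of_le (Asymptotics.IsLittleO.add hA hB) fun n => traceNorm_add_le (A n) (B n)

lemma neg (hA : IsTraceNegligible A) : IsTraceNegligible (fun n => -A n) :=
  of_le hA fun n => (traceNorm_neg (A n)).le

lemma sub (hA : IsTraceNegligible A) (hB : IsTraceNegligible B) :
    IsTraceNegligible (fun n => A n - B n) := by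
  simpa only [sub_eq_add_neg] using hA.add hB.neg

lemma sum {α : Type*} {s : Finset α} {A : α → ∀ n, Matrix (ι n) (κ n) ℂ}
    (hA : ∀ a ∈ s, IsTraceNegligible (A a)) : IsTraceNegligible (fun n => ∑ a ∈ s, A a n) :=
  of_le (Asymptotics.IsLittleO.sum hA) fun n => by
    simpa only [Finset.sum_apply] using traceNorm_sum_le s fun a => A a n

lemma const_smul (c : ℂ) (hA : IsTraceNegligible A) : IsTraceNegligible (fun n => c • A n) :=
  of_le (Asymptotics.IsLittleO.const_mul_left hA ‖c‖) fun n => traceNorm_smul_le c (A n)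

lemma mul_left [∀ n, DecidableEq (ν n)] {L : ∀ n, Matrix (ν n) (ι n) ℂ} {C : ℝ}
    (hA : IsTraceNegligible A) (hL : ∀ n, ‖L n‖ ≤ C) : IsTraceNegligible (fun n => L n * A n) :=
  of_le (Asymptotics.IsLittleO.const_mul_left hA C) fun n =>
    (traceNorm_mul_le_left (L n) (A n)).trans <|
      mul_le_mul_of_nonneg_right (hL n) (traceNorm_nonneg _)

lemma mul_right [∀ n, DecidableEq (ν n)] {R : ∀ n, Matrix (κ n) (ν n) ℂ} {C : ℝ}
    (hA : IsTraceNegligible A) (hR : ∀ n, ‖R n‖ ≤ C) : IsTraceNegligible (fun n => A n * R n) :=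
  of_le (Asymptotics.IsLittleO.const_mul_left hA C) fun n =>
    (traceNorm_mul_le_right (A n) (R n)).trans <| by
      rw [mul_comm C]
      exact mul_le_mul_of_nonneg_left (hR n) (traceNorm_nonneg _)

lemma of_blocks {ρ τ : Type*} [Fintype ρ] [Fintype τ] [DecidableEq ρ]
    {A : ∀ n, Matrix (ι n × ρ) (κ n × τ) ℂ}
    (hA : ∀ a b, IsTraceNegligible (fun n => (A n).submatrix (·, a) (·, b))) :
    IsTraceNegligible A :=
  of_le (Asymptotics.IsLittleO.sum fun a _ => Asymptotics.IsLittleO.sum fun b _ => hA a b)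
    fun n => by simpa only [Finset.sum_apply] using traceNorm_le_sum_blocks (A n)

end IsTraceNegligible

end TraceNegligible

section Toeplitz

open scoped Matrix.Norms.L2Operator

open AddCircle

variable {T : ℝ}

/-- The vector of frequencies whose rank-one projections, weighted by `f`, average to the Toeplitz
matrix of `f`. -/
def fourierVec (n : ℕ) (x : AddCircle T) : EuclideanSpace ℂ (Fin n) :=
  WithLp.toLp 2 fun i => fourier (-(i : ℤ)) x

lemma norm_sq_fourierVec (n : ℕ) (x : AddCircle T) : ‖fourierVec n x‖ ^ 2 = n := by
  have hnorm (i : Fin n) : ‖(fourierVec n x).ofLp i‖ = 1 := Circle.norm_coe _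
  simp [EuclideanSpace.norm_sq_eq, hnorm]

lemma continuous_star_fourierVec_dotProduct {n : ℕ} (y : Fin n → ℂ) :
    Continuous fun x : AddCircle T => star (fourierVec n x).ofLp ⬝ᵥ y := by
  simp only [dotProduct, fourierVec, Pi.star_apply]
  fun_prop

variable [hT : Fact (0 < T)]

/-- The Toeplitz matrix `[f̂_{i-j}]` of size `n` generated by a scalar function on a circle. -/
def toeplitz (f : AddCircle T → ℂ) (n : ℕ) : Matrix (Fin n) (Fin n) ℂ :=
  of fun i j => fourierCoeff f ((i : ℤ) - (j : ℤ))

lemma toeplitz_add {f g : AddCircle T → ℂ} (hf : Integrable f haarAddCircle)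
    (hg : Integrable g haarAddCircle) (n : ℕ) :
    toeplitz (f + g) n = toeplitz f n + toeplitz g n := by
  ext i j
  simp [toeplitz, fourierCoeff.add hf hg]

lemma toeplitz_const_smul (c : ℂ) (f : AddCircle T → ℂ) (n : ℕ) :
    toeplitz (c • f) n = c • toeplitz f n := by
  ext i j
  simp [toeplitz, fourierCoeff.const_smul]

lemma toeplitz_sub {f g : AddCircle T → ℂ} (hf : Integrable f haarAddCircle)
    (hg : Integrable g haarAddCircle) (n : ℕ) :
    toeplitz (f - g) n = toeplitz f n - toeplitz g n := by
  have hsub : f - g = f + (-1 : ℂ) • g := by rw [neg_one_smul, sub_eq_add_neg]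
  rw [hsub, toeplitz_add hf (hg.smul _), toeplitz_const_smul, neg_one_smul, sub_eq_add_neg]

lemma toeplitz_sum {α : Type*} (s : Finset α) {f : α → AddCircle T → ℂ}
    (hf : ∀ a ∈ s, Integrable (f a) haarAddCircle) (n : ℕ) :
    toeplitz (∑ a ∈ s, f a) n = ∑ a ∈ s, toeplitz (f a) n := by
  ext i j
  simp [toeplitz, fourierCoeff.sum s f hf, Matrix.sum_apply]

lemma toeplitz_zero (n : ℕ) : toeplitz (0 : AddCircle T → ℂ) n = 0 := by
  simpa using toeplitz_const_smul (0 : ℂ) (0 : AddCircle T → ℂ) n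

lemma toeplitz_fourier_apply (m : ℤ) {n : ℕ} (i j : Fin n) :
    toeplitz (fourier m : C(AddCircle T, ℂ)) n i j = if (i : ℤ) - j = m then 1 else 0 := by
  simp [toeplitz, fourierCoeff_fourier, Pi.single_apply]

lemma toeplitz_one (n : ℕ) : toeplitz (1 : AddCircle T → ℂ) n = 1 := by
  have h1 : (1 : AddCircle T → ℂ) = (fourier 0 : C(AddCircle T, ℂ)) := by ext; simp
  ext i j
  rw [h1, toeplitz_fourier_apply, one_apply]
  simp only [sub_eq_zero, Nat.cast_inj, Fin.val_inj]

lemma conjTranspose_toeplitz (f : AddCircle T → ℂ) (n : ℕ) :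
    (toeplitz f n)ᴴ = toeplitz (star f) n := by
  ext i j
  simp only [toeplitz, conjTranspose_apply, of_apply, fourierCoeff, RCLike.star_def,
    ← integral_conj]
  congr 1 with x
  simp only [smul_eq_mul, map_mul, ← fourier_neg, Pi.star_apply, RCLike.star_def]
  congr 2
  ring_nf

lemma trace_toeplitz_mul {f : AddCircle T → ℂ} (hf : Integrable f haarAddCircle) {n : ℕ}
    (X : Matrix (Fin n) (Fin n) ℂ) :
    (toeplitz f n * X).trace = ∫ x, f x * (star (fourierVec n x).ofLp ⬝ᵥ X *ᵥ (fourierVec n x).ofLp)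
      ∂haarAddCircle := by
  have hint (i j : Fin n) :
      Integrable (fun x => (fourier (-((i : ℤ) - j)) x • f x) * X j i) haarAddCircle :=
    (hf.fourier_smul _).mul_const _
  have hsum (x : AddCircle T) : f x * (star (fourierVec n x).ofLp ⬝ᵥ X *ᵥ (fourierVec n x).ofLp) =
      ∑ i : Fin n, ∑ j : Fin n, (fourier (-((i : ℤ) - j)) x • f x) * X j i := by
    simp only [dotProduct, mulVec, Finset.mul_sum]
    rw [Finset.sum_comm]
    refine Finset.sum_congr rfl fun i _ => Finset.sum_congr rfl fun j _ => ?_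
    rw [neg_sub, sub_eq_add_neg, fourier_add]
    simp only [fourierVec, Pi.star_apply, RCLike.star_def, ← fourier_neg, neg_neg, smul_eq_mul]
    ring
  simp only [hsum]
  rw [integral_finsetSum _ fun i _ => integrable_finsetSum _ fun j _ => hint i j]
  simp only [trace, diag_apply, mul_apply]
  refine Finset.sum_congr rfl fun i _ => ?_
  rw [integral_finsetSum _ fun j _ => hint i j]
  simp only [integral_mul_const, toeplitz, of_apply, fourierCoeff]

/-- Parseval's identity, read off from `toeplitz 1 n = 1`. -/
lemma integral_norm_sq_star_fourierVec_dotProduct {n : ℕ} (y : EuclideanSpace ℂ (Fin n)) :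
    ∫ x : AddCircle T, ‖star (fourierVec n x).ofLp ⬝ᵥ y.ofLp‖ ^ 2 ∂haarAddCircle = ‖y‖ ^ 2 := by
  have h := trace_toeplitz_mul (f := (1 : AddCircle T → ℂ)) (integrable_const _)
    (vecMulVec y.ofLp (star y.ofLp))
  have hsq (x : AddCircle T) : (1 : AddCircle T → ℂ) x * (star (fourierVec n x).ofLp ⬝ᵥ
      vecMulVec y.ofLp (star y.ofLp) *ᵥ (fourierVec n x).ofLp) =
      ((‖star (fourierVec n x).ofLp ⬝ᵥ y.ofLp‖ ^ 2 : ℝ) : ℂ) := by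
    rw [vecMulVec_mulVec, op_smul_eq_smul, dotProduct_smul, star_dotProduct y.ofLp,
      Pi.one_apply, one_mul, smul_eq_mul, RCLike.star_def, Complex.conj_mul', Complex.ofReal_pow]
  simp only [hsq, integral_complex_ofReal] at h
  rw [toeplitz_one, one_mul, trace_vecMulVec, ← EuclideanSpace.inner_eq_star_dotProduct,
    inner_self_eq_norm_sq_to_K] at h
  exact Complex.ofReal_injective (h.symm.trans (Complex.ofReal_pow _ _).symm)

lemma l2_opNorm_toeplitz_le {g : AddCircle T → ℂ} (hg : AEStronglyMeasurable g haarAddCircle)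
    {C : ℝ} (hC : ∀ᵐ x ∂haarAddCircle, ‖g x‖ ≤ C) (n : ℕ) : ‖toeplitz g n‖ ≤ C := by
  have hC0 : 0 ≤ C := let ⟨x, hx⟩ := hC.exists; (norm_nonneg (g x)).trans hx
  have hgi : Integrable g haarAddCircle := .of_bound hg C hC
  refine l2_opNorm_le_of_dotProduct_mulVec_le hC0 fun u w hu hw => ?_
  set p := fun (y : EuclideanSpace ℂ (Fin n)) (x : AddCircle T) =>
    star (fourierVec n x).ofLp ⬝ᵥ y.ofLp
  have hpi (y : EuclideanSpace ℂ (Fin n)) : Integrable (fun x => ‖p y x‖ ^ 2) haarAddCircle :=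
    ((continuous_star_fourierVec_dotProduct y.ofLp).norm.pow 2).integrable_of_hasCompactSupport
      (.of_compactSpace _)
  have hform : star w.ofLp ⬝ᵥ toeplitz g n *ᵥ u.ofLp =
      ∫ x, g x * (p u x * star (p w x)) ∂haarAddCircle := by
    have htrace : star w.ofLp ⬝ᵥ toeplitz g n *ᵥ u.ofLp =
        (toeplitz g n * vecMulVec u.ofLp (star w.ofLp)).trace := by
      rw [mul_vecMulVec, trace_vecMulVec, dotProduct_comm]
    rw [htrace, trace_toeplitz_mul hgi]
    congr 1 with x
    rw [vecMulVec_mulVec, op_smul_eq_smul, dotProduct_smul, star_dotProduct w.ofLp, smul_eq_mul,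
      mul_comm (star _)]
  have hbound : ∀ᵐ x ∂haarAddCircle, ‖g x * (p u x * star (p w x))‖ ≤
      C * ((‖p u x‖ ^ 2 + ‖p w x‖ ^ 2) / 2) := by
    filter_upwards [hC] with x hx
    rw [norm_mul, norm_mul, norm_star]
    gcongr
    linarith [two_mul_le_add_sq ‖p u x‖ ‖p w x‖]
  calc ‖star w.ofLp ⬝ᵥ toeplitz g n *ᵥ u.ofLp‖
      ≤ ∫ x, C * ((‖p u x‖ ^ 2 + ‖p w x‖ ^ 2) / 2) ∂haarAddCircle := by
        rw [hform]
        exact norm_integral_le_of_norm_le ((((hpi u).add (hpi w)).div_const 2).const_mul C) hbound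
    _ = C := by
        rw [integral_const_mul, integral_div, integral_add (hpi u) (hpi w),
          integral_norm_sq_star_fourierVec_dotProduct, integral_norm_sq_star_fourierVec_dotProduct,
          hu, hw]
        ring

lemma traceNorm_toeplitz_le {f : AddCircle T → ℂ} (hf : Integrable f haarAddCircle) (n : ℕ) :
    traceNorm (toeplitz f n) ≤ n * ∫ x, ‖f x‖ ∂haarAddCircle := by
  refine traceNorm_le (by positivity) fun X => ?_
  have hbound (x : AddCircle T) :
      ‖f x * (star (fourierVec n x).ofLp ⬝ᵥ X *ᵥ (fourierVec n x).ofLp)‖ ≤ ‖f x‖ * (n * ‖X‖) := by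
    rw [norm_mul]
    gcongr
    calc _ ≤ ‖X‖ * ‖fourierVec n x‖ * ‖fourierVec n x‖ := norm_star_dotProduct_mulVec_le _ _ _
      _ = n * ‖X‖ := by rw [mul_assoc, ← sq, norm_sq_fourierVec, mul_comm]
  rw [trace_toeplitz_mul hf]
  refine (norm_integral_le_of_norm_le (hf.norm.mul_const _) (ae_of_all _ hbound)).trans_eq ?_
  rw [integral_mul_const]
  ring

lemma card_sub_notMem_Ico_le (n : ℕ) (m : ℤ) :
    (Finset.univ.filter fun i : Fin n => (i : ℤ) - m ∉ Set.Ico (0 : ℤ) n).card ≤ m.natAbs := by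
  conv_rhs => rw [← Finset.card_range m.natAbs]
  refine Finset.card_le_card_of_injOn (fun i => if 0 ≤ m then (i : ℕ) else n - 1 - i) ?_ ?_
  · intro i hi
    simp only [Finset.coe_filter, Finset.mem_univ, true_and, Set.mem_ofPred_eq, Set.mem_Ico] at hi
    simp only [Finset.coe_range, Set.mem_Iio]
    split_ifs <;> omega
  · intro i _ j _ h
    apply Fin.ext
    simp only at h
    split_ifs at h <;> omega

lemma fourierCoeff_fourier_mul (m : ℤ) (g : AddCircle T → ℂ) (k : ℤ) :
    fourierCoeff (⇑(fourier m : C(AddCircle T, ℂ)) * g) k = fourierCoeff g (k - m) := by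
  simp only [fourierCoeff, Pi.mul_apply, smul_eq_mul, ← mul_assoc, ← fourier_add, neg_sub,
    neg_add_eq_sub]

/-- Multiplying by the Toeplitz matrix of a character shifts the rows; the rows shifted in from
outside the matrix are lost. -/
lemma toeplitz_fourier_mul_sub (m : ℤ) (g : AddCircle T → ℂ) (n : ℕ) :
    toeplitz (fourier m : C(AddCircle T, ℂ)) n * toeplitz g n -
        toeplitz (⇑(fourier m : C(AddCircle T, ℂ)) * g) n =
      -(diagonal (fun i : Fin n => if (i : ℤ) - m ∈ Set.Ico (0 : ℤ) n then 0 else 1) *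
        toeplitz (⇑(fourier m : C(AddCircle T, ℂ)) * g) n) := by
  ext i j
  rw [Matrix.sub_apply, Matrix.neg_apply, diagonal_mul, mul_apply]
  simp only [toeplitz_fourier_apply, ite_mul, one_mul, zero_mul]
  have hentry : toeplitz (⇑(fourier m : C(AddCircle T, ℂ)) * g) n i j =
      fourierCoeff g ((i : ℤ) - m - j) := by
    rw [toeplitz, of_apply, fourierCoeff_fourier_mul, sub_right_comm]
  rw [hentry]
  split_ifs with hi
  · obtain ⟨k, hk⟩ : ∃ k : Fin n, (k : ℤ) = i - m :=
      ⟨⟨((i : ℤ) - m).toNat, by have := hi.1; have := hi.2; omega⟩, Int.toNat_of_nonneg hi.1⟩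
    rw [Finset.sum_eq_single k (fun l _ hl => if_neg (by omega)) (by simp), if_pos (by omega),
      toeplitz, of_apply, hk, sub_self, neg_zero]
  · rw [Finset.sum_eq_zero fun k _ => if_neg (by rw [Set.mem_Ico] at hi; omega), zero_sub]

lemma isTraceNegligible_toeplitz_fourier_mul_sub (m : ℤ) {g : AddCircle T → ℂ}
    (hg : AEStronglyMeasurable g haarAddCircle) {C : ℝ} (hC : ∀ᵐ x ∂haarAddCircle, ‖g x‖ ≤ C) :
    IsTraceNegligible fun n =>
      toeplitz (fourier m : C(AddCircle T, ℂ)) n * toeplitz g n -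
        toeplitz (⇑(fourier m : C(AddCircle T, ℂ)) * g) n := by
  have hnorm (n : ℕ) : ‖toeplitz (⇑(fourier m : C(AddCircle T, ℂ)) * g) n‖ ≤ C :=
    l2_opNorm_toeplitz_le ((fourier m).continuous.aestronglyMeasurable.mul hg)
      (by filter_upwards [hC] with x hx; simpa [fourier_apply, Circle.norm_coe] using hx) n
  have hdiag : IsTraceNegligible fun n : ℕ => diagonal fun i : Fin n =>
      if (i : ℤ) - m ∈ Set.Ico (0 : ℤ) n then (0 : ℂ) else 1 := by
    refine .of_le_const (C := m.natAbs) fun n => (traceNorm_diagonal_le _).trans ?_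
    simp only [apply_ite norm, norm_zero, norm_one, ← ite_not (p := _ ∈ _), Finset.sum_boole]
    exact_mod_cast card_sub_notMem_Ico_le n m
  simp only [toeplitz_fourier_mul_sub]
  exact (hdiag.mul_right hnorm).neg

lemma isTraceNegligible_toeplitz_mul_sub_of_mem_span {p : C(AddCircle T, ℂ)}
    (hp : p ∈ Submodule.span ℂ (Set.range (fourier (T := T)))) {g : AddCircle T → ℂ}
    (hg : AEStronglyMeasurable g haarAddCircle) {C : ℝ} (hC : ∀ᵐ x ∂haarAddCircle, ‖g x‖ ≤ C) :
    IsTraceNegligible fun n => toeplitz p n * toeplitz g n - toeplitz (⇑p * g) n := by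
  have hint (q : C(AddCircle T, ℂ)) : Integrable q haarAddCircle :=
    q.continuous.integrable_of_hasCompactSupport (.of_compactSpace _)
  have hmul (q : C(AddCircle T, ℂ)) : Integrable (⇑q * g) haarAddCircle := (hint q).mul_bdd hg hC
  induction hp using Submodule.span_induction with
  | mem _ h =>
    obtain ⟨m, rfl⟩ := h
    exact isTraceNegligible_toeplitz_fourier_mul_sub m hg hC
  | zero => simpa [toeplitz_zero] using IsTraceNegligible.zero
  | add p q _ _ ihp ihq =>
    convert ihp.add ihq using 2 with n
    rw [ContinuousMap.coe_add, add_mul, toeplitz_add (hint p) (hint q),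
      toeplitz_add (hmul p) (hmul q), Matrix.add_mul]
    abel
  | smul c p _ ihp =>
    convert ihp.const_smul c using 2 with n
    rw [ContinuousMap.coe_smul, smul_mul_assoc, toeplitz_const_smul, toeplitz_const_smul,
      Matrix.smul_mul, smul_sub]

lemma exists_mem_span_fourier_integral_norm_sub_le {f : AddCircle T → ℂ}
    (hf : Integrable f haarAddCircle) {ε : ℝ} (hε : 0 < ε) :
    ∃ p ∈ Submodule.span ℂ (Set.range (fourier (T := T))),
      ∫ x, ‖f x - p x‖ ∂haarAddCircle ≤ ε := by
  obtain ⟨g, hfg, hg⟩ := hf.exists_boundedContinuous_integral_sub_le (half_pos hε)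
  have hmem : g.toContinuousMap ∈
      (Submodule.span ℂ (Set.range (fourier (T := T)))).topologicalClosure :=
    span_fourier_closure_eq_top (T := T) ▸ Submodule.mem_top
  obtain ⟨p, hp, hgp⟩ := Metric.mem_closure_iff.1 hmem (ε / 2) (half_pos hε)
  have hpi : Integrable p haarAddCircle :=
    p.continuous.integrable_of_hasCompactSupport (.of_compactSpace _)
  refine ⟨p, hp, ?_⟩
  calc ∫ x, ‖f x - p x‖ ∂haarAddCircle
      ≤ ∫ x, (‖f x - g x‖ + ε / 2) ∂haarAddCircle := by
        refine integral_mono (hf.sub hpi).norm ((hf.sub hg).norm.add (integrable_const _))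
          fun x => ?_
        have hx : ‖g x - p x‖ ≤ ε / 2 := by
          rw [← dist_eq_norm]
          exact (ContinuousMap.dist_apply_le_dist x).trans hgp.le
        exact (norm_sub_le_norm_sub_add_norm_sub _ (g x) _).trans (by gcongr)
    _ ≤ ε := by
        have hadd := integral_add (hf.sub hg).norm (integrable_const (μ := haarAddCircle) (ε / 2))
        simp only [Pi.sub_apply, integral_const, probReal_univ, one_smul] at hadd
        linarith

lemma traceNorm_toeplitz_mul_sub_le {f g : AddCircle T → ℂ} (hf : Integrable f haarAddCircle)
    (hg : AEStronglyMeasurable g haarAddCircle) {C : ℝ} (hC : ∀ᵐ x ∂haarAddCircle, ‖g x‖ ≤ C)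
    (n : ℕ) :
    traceNorm (toeplitz f n * toeplitz g n - toeplitz (f * g) n) ≤
      2 * C * n * ∫ x, ‖f x‖ ∂haarAddCircle := by
  have hfg : Integrable (f * g) haarAddCircle := hf.mul_bdd hg hC
  have hmul : traceNorm (toeplitz f n * toeplitz g n) ≤ n * (∫ x, ‖f x‖ ∂haarAddCircle) * C :=
    (traceNorm_mul_le_right _ _).trans <| mul_le_mul (traceNorm_toeplitz_le hf n)
      (l2_opNorm_toeplitz_le hg hC n) (norm_nonneg _) (by positivity)
  have hint : ∫ x, ‖(f * g) x‖ ∂haarAddCircle ≤ (∫ x, ‖f x‖ ∂haarAddCircle) * C := by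
    rw [← integral_mul_const]
    refine integral_mono_ae hfg.norm (hf.norm.mul_const C) ?_
    filter_upwards [hC] with x hx
    rw [Pi.mul_apply, norm_mul]
    gcongr
  calc traceNorm (toeplitz f n * toeplitz g n - toeplitz (f * g) n)
      ≤ traceNorm (toeplitz f n * toeplitz g n) + traceNorm (toeplitz (f * g) n) := by
        rw [sub_eq_add_neg, ← traceNorm_neg (toeplitz (f * g) n)]
        exact traceNorm_add_le _ _
    _ ≤ n * (∫ x, ‖f x‖ ∂haarAddCircle) * C + n * ((∫ x, ‖f x‖ ∂haarAddCircle) * C) :=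
        add_le_add hmul ((traceNorm_toeplitz_le hfg n).trans (by gcongr))
    _ = 2 * C * n * ∫ x, ‖f x‖ ∂haarAddCircle := by ring

lemma isTraceNegligible_toeplitz_mul_sub {f g : AddCircle T → ℂ} (hf : Integrable f haarAddCircle)
    (hg : AEStronglyMeasurable g haarAddCircle) {C : ℝ} (hC : ∀ᵐ x ∂haarAddCircle, ‖g x‖ ≤ C) :
    IsTraceNegligible fun n => toeplitz f n * toeplitz g n - toeplitz (f * g) n := by
  have hC0 : 0 ≤ C := let ⟨x, hx⟩ := hC.exists; (norm_nonneg (g x)).trans hx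
  refine Asymptotics.isLittleO_iff.2 fun c hc => ?_
  set ε := c / (2 * C + 1) with hε_def
  have hε : 0 < ε := by positivity
  obtain ⟨p, hp, hfp⟩ := exists_mem_span_fourier_integral_norm_sub_le hf hε
  have hpi : Integrable p haarAddCircle :=
    p.continuous.integrable_of_hasCompactSupport (.of_compactSpace _)
  have hfg : Integrable (f * g) haarAddCircle := hf.mul_bdd hg hC
  have hpg : Integrable (⇑p * g) haarAddCircle := hpi.mul_bdd hg hC
  have hsplit (n : ℕ) : toeplitz f n * toeplitz g n - toeplitz (f * g) n =
      (toeplitz (f - ⇑p) n * toeplitz g n - toeplitz ((f - ⇑p) * g) n) +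
        (toeplitz p n * toeplitz g n - toeplitz (⇑p * g) n) := by
    rw [sub_mul f, toeplitz_sub hf hpi, toeplitz_sub hfg hpg, Matrix.sub_mul]
    abel
  have hmid := isTraceNegligible_toeplitz_mul_sub_of_mem_span hp hg hC
  filter_upwards [Asymptotics.isLittleO_iff.1 hmid hε] with n hn
  rw [Real.norm_of_nonneg (traceNorm_nonneg _), Real.norm_natCast] at hn ⊢
  calc traceNorm (toeplitz f n * toeplitz g n - toeplitz (f * g) n)
      ≤ 2 * C * n * (∫ x, ‖(f - ⇑p) x‖ ∂haarAddCircle) + ε * n := by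
        rw [hsplit]
        exact (traceNorm_add_le _ _).trans
          (add_le_add (traceNorm_toeplitz_mul_sub_le (hf.sub hpi) hg hC n) hn)
    _ ≤ 2 * C * n * ε + ε * n := by
        gcongr
        exact hfp
    _ = c * n := by
        rw [hε_def]
        field_simp

end Toeplitz

section BlockToeplitz

open scoped Matrix.Norms.L2Operator

open AddCircle

variable {T : ℝ} [hT : Fact (0 < T)] {ρ τ υ : Type*}

/-- The block Toeplitz matrix of block size `n` generated by a matrix-valued function on a circle;
each of its submatrices with fixed positions inside the blocks is the Toeplitz matrix of an
entry. -/
def circleBlockToeplitz (f : AddCircle T → Matrix ρ τ ℂ) (n : ℕ) :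
    Matrix (Fin n × ρ) (Fin n × τ) ℂ :=
  of fun p q => toeplitz (fun x => f x p.2 q.2) n p.1 q.1

lemma circleBlockToeplitz_sub {f g : AddCircle T → Matrix ρ τ ℂ}
    (hf : ∀ a b, Integrable (fun x => f x a b) haarAddCircle)
    (hg : ∀ a b, Integrable (fun x => g x a b) haarAddCircle) (n : ℕ) :
    circleBlockToeplitz (fun x => f x - g x) n =
      circleBlockToeplitz f n - circleBlockToeplitz g n := by
  ext p q
  exact congr_fun₂ (toeplitz_sub (hf p.2 q.2) (hg p.2 q.2) n) p.1 q.1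

lemma conjTranspose_circleBlockToeplitz (f : AddCircle T → Matrix ρ τ ℂ) (n : ℕ) :
    (circleBlockToeplitz f n)ᴴ = circleBlockToeplitz (fun x => (f x)ᴴ) n := by
  ext p q
  exact congr_fun₂ (conjTranspose_toeplitz (fun x => f x q.2 p.2) n) p.1 q.1

lemma circleBlockToeplitz_one [DecidableEq ρ] (n : ℕ) :
    circleBlockToeplitz (fun _ : AddCircle T => (1 : Matrix ρ ρ ℂ)) n = 1 := by
  ext ⟨i, a⟩ ⟨j, b⟩
  rcases eq_or_ne a b with rfl | hab
  · have h := congr_fun₂ (toeplitz_one (T := T) n) i j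
    simpa [circleBlockToeplitz, one_apply, Pi.one_def] using h
  · have h := congr_fun₂ (toeplitz_zero (T := T) n) i j
    simpa [circleBlockToeplitz, one_apply, hab, Pi.zero_def] using h

lemma trace_circleBlockToeplitz [Fintype ρ] {f : AddCircle T → Matrix ρ ρ ℂ}
    (hf : ∀ a b, Integrable (fun x => f x a b) haarAddCircle) (n : ℕ) :
    (circleBlockToeplitz f n).trace = n * ∫ x, (f x).trace ∂haarAddCircle := by
  simp only [trace, diag_apply, circleBlockToeplitz, of_apply, toeplitz, sub_self, fourierCoeff,
    neg_zero, fourier_zero, one_smul]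
  rw [integral_finsetSum _ fun a _ => hf a a]
  simp only [Fintype.sum_prod_type, Finset.sum_const, Finset.card_univ, Fintype.card_fin,
    nsmul_eq_mul]

lemma isTraceNegligible_circleBlockToeplitz_mul_sub [Fintype ρ] [Fintype τ] [Fintype υ]
    [DecidableEq ρ] {f : AddCircle T → Matrix ρ τ ℂ} {g : AddCircle T → Matrix τ υ ℂ}
    (hf : ∀ a b, Integrable (fun x => f x a b) haarAddCircle)
    (hg : ∀ a b, AEStronglyMeasurable (fun x => g x a b) haarAddCircle) {C : ℝ}
    (hC : ∀ a b, ∀ᵐ x ∂haarAddCircle, ‖g x a b‖ ≤ C) :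
    IsTraceNegligible fun n => circleBlockToeplitz f n * circleBlockToeplitz g n -
      circleBlockToeplitz (fun x => f x * g x) n := by
  refine .of_blocks fun a c => ?_
  convert IsTraceNegligible.sum (s := Finset.univ) fun b _ =>
    isTraceNegligible_toeplitz_mul_sub (hf a b) (hg b c) (hC b c) using 2 with n
  have hsum := toeplitz_sum Finset.univ (f := fun b => (fun x => f x a b) * fun x => g x b c)
    (fun b _ => (hf a b).mul_bdd (hg b c) (hC b c)) n
  rw [Finset.sum_sub_distrib, ← hsum]
  ext i j
  simp only [circleBlockToeplitz, submatrix_apply, Matrix.sub_apply, Matrix.sum_apply, mul_apply,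
    of_apply, Fintype.sum_prod_type]
  rw [Finset.sum_comm]
  congr 3
  ext x
  simp only [Finset.sum_apply, Pi.mul_apply]

end BlockToeplitz

section GramResolvent

open scoped Matrix.Norms.L2Operator MatrixOrder ComplexOrder

variable {m n : Type*} [Fintype m] [Fintype n] [DecidableEq m]

/-- The resolvent of the Gram matrix `A * Aᴴ` at the point `-1`. -/
def gramResolvent (A : Matrix m n ℂ) : Matrix m m ℂ :=
  (1 + A * Aᴴ)⁻¹

lemma isUnit_det_one_add_mul_conjTranspose (A : Matrix m n ℂ) : IsUnit (1 + A * Aᴴ).det :=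
  (isUnit_iff_isUnit_det _).1
    (PosDef.one.add_posSemidef (posSemidef_self_mul_conjTranspose A)).isUnit

lemma gramResolvent_mul_one_add (A : Matrix m n ℂ) : gramResolvent A * (1 + A * Aᴴ) = 1 :=
  nonsing_inv_mul _ (isUnit_det_one_add_mul_conjTranspose A)

lemma one_add_mul_gramResolvent (A : Matrix m n ℂ) : (1 + A * Aᴴ) * gramResolvent A = 1 :=
  mul_nonsing_inv _ (isUnit_det_one_add_mul_conjTranspose A)

lemma conjTranspose_gramResolvent (A : Matrix m n ℂ) : (gramResolvent A)ᴴ = gramResolvent A := by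
  simp [gramResolvent, conjTranspose_nonsing_inv]

lemma gramResolvent_eq_add (A : Matrix m n ℂ) :
    gramResolvent A = gramResolvent A * (gramResolvent A)ᴴ +
      (gramResolvent A * A) * (gramResolvent A * A)ᴴ := by
  calc gramResolvent A = gramResolvent A * (1 + A * Aᴴ) * gramResolvent A := by
        rw [gramResolvent_mul_one_add, Matrix.one_mul]
    _ = _ := by
        rw [conjTranspose_mul, conjTranspose_gramResolvent]
        simp only [Matrix.mul_add, Matrix.add_mul, Matrix.mul_one, Matrix.mul_assoc]

lemma mul_conjTranspose_mul_gramResolvent_pow_succ (A : Matrix m n ℂ) (k : ℕ) :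
    A * (Aᴴ * gramResolvent A ^ (k + 1)) = gramResolvent A ^ k - gramResolvent A ^ (k + 1) := by
  rw [eq_sub_iff_add_eq']
  calc gramResolvent A ^ (k + 1) + A * (Aᴴ * gramResolvent A ^ (k + 1))
      = (1 + A * Aᴴ) * gramResolvent A * gramResolvent A ^ k := by
        simp only [pow_succ', Matrix.add_mul, Matrix.one_mul, Matrix.mul_assoc]
    _ = gramResolvent A ^ k := by rw [one_add_mul_gramResolvent, Matrix.one_mul]

lemma continuous_gramResolvent : Continuous fun A : Matrix m n ℂ => gramResolvent A := by
  have hcont : Continuous fun A : Matrix m n ℂ => 1 + A * Aᴴ := by fun_prop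
  simp only [gramResolvent, inv_def, Ring.inverse_eq_inv']
  exact (hcont.matrix_det.inv₀ fun A => (isUnit_det_one_add_mul_conjTranspose A).ne_zero).smul
    hcont.matrix_adjugate

lemma l2_opNorm_gramResolvent_le (A : Matrix m n ℂ) : ‖gramResolvent A‖ ≤ 1 := by
  have hle : ‖gramResolvent A * (gramResolvent A)ᴴ‖ ≤ ‖gramResolvent A‖ := by
    refine CStarAlgebra.norm_le_norm_of_nonneg_of_le
      (posSemidef_self_mul_conjTranspose _).nonneg ?_
    conv_rhs => rw [gramResolvent_eq_add A]
    exact le_add_of_nonneg_right (posSemidef_self_mul_conjTranspose _).nonneg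
  rw [l2_opNorm_mul_conjTranspose_self] at hle
  nlinarith [norm_nonneg (gramResolvent A)]

lemma l2_opNorm_gramResolvent_pow_le (A : Matrix m n ℂ) (k : ℕ) : ‖gramResolvent A ^ k‖ ≤ 1 := by
  induction k with
  | zero => simpa only [pow_zero] using l2_opNorm_one_le
  | succ k ih =>
    rw [pow_succ]
    exact (l2_opNorm_mul _ _).trans
      (mul_le_one₀ ih (norm_nonneg _) (l2_opNorm_gramResolvent_le A))

lemma l2_opNorm_gramResolvent_mul_le [DecidableEq n] (A : Matrix m n ℂ) :
    ‖gramResolvent A * A‖ ≤ 1 := by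
  have hle : ‖(gramResolvent A * A) * (gramResolvent A * A)ᴴ‖ ≤ ‖gramResolvent A‖ := by
    refine CStarAlgebra.norm_le_norm_of_nonneg_of_le
      (posSemidef_self_mul_conjTranspose _).nonneg ?_
    conv_rhs => rw [gramResolvent_eq_add A]
    exact le_add_of_nonneg_left (posSemidef_self_mul_conjTranspose _).nonneg
  rw [l2_opNorm_mul_conjTranspose_self, ← sq] at hle
  exact (sq_le_one_iff₀ (norm_nonneg _)).1 (hle.trans (l2_opNorm_gramResolvent_le A))

lemma l2_opNorm_conjTranspose_mul_gramResolvent_pow_succ_le (A : Matrix m n ℂ) (k : ℕ) :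
    ‖Aᴴ * gramResolvent A ^ (k + 1)‖ ≤ 1 := by
  classical
  have h : ‖Aᴴ * gramResolvent A‖ ≤ 1 := by
    rw [← conjTranspose_gramResolvent, ← conjTranspose_mul, l2_opNorm_conjTranspose]
    exact l2_opNorm_gramResolvent_mul_le A
  rw [pow_succ', ← Matrix.mul_assoc]
  exact (l2_opNorm_mul _ _).trans
    (mul_le_one₀ h (norm_nonneg _) (l2_opNorm_gramResolvent_pow_le A k))

end GramResolvent

section ResolventToeplitz

open scoped Matrix.Norms.L2Operator

open AddCircle

lemma aestronglyMeasurable_of_matrix_apply {α E ρ τ : Type*} [MeasurableSpace α] {μ : Measure α}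
    [TopologicalSpace E] [AddCommMonoid E] [ContinuousAdd E] [Finite ρ] [Finite τ]
    {f : α → Matrix ρ τ E} (hf : ∀ a b, AEStronglyMeasurable (fun x => f x a b) μ) :
    AEStronglyMeasurable f μ := by
  classical
  cases nonempty_fintype ρ
  cases nonempty_fintype τ
  have hsum : f = fun x => ∑ a, ∑ b, single a b (f x a b) := by
    ext1 x
    exact matrix_eq_sum_single (f x)
  have hsingle (a : ρ) (b : τ) : Continuous (single a b : E → Matrix ρ τ E) :=
    continuous_matrix fun i j => by
      simp only [single_apply]
      split_ifs <;> fun_prop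
  rw [hsum]
  exact Finset.aestronglyMeasurable_fun_sum _ fun a _ =>
    Finset.aestronglyMeasurable_fun_sum _ fun b _ =>
      (hsingle a b).comp_aestronglyMeasurable (hf a b)

variable {α ρ τ : Type*} [Fintype ρ] [Fintype τ] [DecidableEq ρ]

lemma integrable_gramResolvent_pow_apply [MeasurableSpace α] {μ : Measure α} [IsFiniteMeasure μ]
    {f : α → Matrix ρ τ ℂ} (hf : AEStronglyMeasurable f μ) (k : ℕ) (a b : ρ) :
    Integrable (fun x => (gramResolvent (f x) ^ k) a b) μ := by
  have hcont : Continuous fun A : Matrix ρ τ ℂ => (gramResolvent A ^ k) a b :=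
    (continuous_gramResolvent.pow k).matrix_elem a b
  exact .of_bound (hcont.comp_aestronglyMeasurable hf) 1 (.of_forall fun x =>
    (norm_apply_le_l2_opNorm _ a b).trans (l2_opNorm_gramResolvent_pow_le (f x) k))

/-- For `A = T_n(f)`, `B = T_n(R(f) ^ (k + 1))`, `B' = T_n(R(f) ^ k)` and
`H = T_n(fᴴ R(f) ^ (k + 1))`, where `R` is the Gram resolvent, all three brackets on the right-hand
side are trace-negligible. -/
lemma gramResolvent_pow_succ_sub (A : Matrix ρ τ ℂ) (k : ℕ) (B B' : Matrix ρ ρ ℂ)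
    (H : Matrix τ ρ ℂ) :
    gramResolvent A ^ (k + 1) - B =
      gramResolvent A * (gramResolvent A ^ k - B') - gramResolvent A * (A * H - (B' - B)) -
        gramResolvent A * A * (Aᴴ * B - H) := by
  have hB : gramResolvent A * B + gramResolvent A * A * (Aᴴ * B) = B := by
    calc gramResolvent A * B + gramResolvent A * A * (Aᴴ * B)
        = gramResolvent A * (1 + A * Aᴴ) * B := by
          simp only [Matrix.mul_add, Matrix.add_mul, Matrix.mul_one, Matrix.mul_assoc]
      _ = B := by rw [gramResolvent_mul_one_add, Matrix.one_mul]
  calc gramResolvent A ^ (k + 1) - B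
      = gramResolvent A * gramResolvent A ^ k -
          (gramResolvent A * B + gramResolvent A * A * (Aᴴ * B)) := by rw [hB, pow_succ']
    _ = _ := by
        simp only [Matrix.mul_sub, Matrix.mul_assoc]
        abel

variable {T : ℝ} [hT : Fact (0 < T)]

lemma isTraceNegligible_gramResolvent_pow_sub {f : AddCircle T → Matrix ρ τ ℂ}
    (hf : ∀ a b, Integrable (fun x => f x a b) haarAddCircle) (k : ℕ) :
    IsTraceNegligible fun n => gramResolvent (circleBlockToeplitz f n) ^ k -
      circleBlockToeplitz (fun x => gramResolvent (f x) ^ k) n := by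
  classical
  have hmeas : AEStronglyMeasurable f haarAddCircle :=
    aestronglyMeasurable_of_matrix_apply fun a b => (hf a b).aestronglyMeasurable
  have hpow (k : ℕ) := integrable_gramResolvent_pow_apply hmeas k
  induction k with
  | zero => simpa only [pow_zero, circleBlockToeplitz_one, sub_self] using .zero
  | succ k ih =>
    have hleft : IsTraceNegligible fun n => circleBlockToeplitz f n *
        circleBlockToeplitz (fun x => (f x)ᴴ * gramResolvent (f x) ^ (k + 1)) n -
          (circleBlockToeplitz (fun x => gramResolvent (f x) ^ k) n -
            circleBlockToeplitz (fun x => gramResolvent (f x) ^ (k + 1)) n) := by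
      have hcont (b : τ) (a : ρ) :
          Continuous fun A : Matrix ρ τ ℂ => (Aᴴ * gramResolvent A ^ (k + 1)) b a :=
        (continuous_id.matrix_conjTranspose.matrix_mul
          (continuous_gramResolvent.pow (k + 1))).matrix_elem b a
      simpa only [mul_conjTranspose_mul_gramResolvent_pow_succ,
        circleBlockToeplitz_sub (hpow k) (hpow (k + 1))] using
        isTraceNegligible_circleBlockToeplitz_mul_sub hf
          (fun b a => (hcont b a).comp_aestronglyMeasurable hmeas)
          (fun b a => .of_forall fun x => (norm_apply_le_l2_opNorm _ b a).trans
            (l2_opNorm_conjTranspose_mul_gramResolvent_pow_succ_le (f x) k))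
    have hright := isTraceNegligible_circleBlockToeplitz_mul_sub
      (f := fun x => (f x)ᴴ) (g := fun x => gramResolvent (f x) ^ (k + 1))
      (fun b a => Complex.conjCLE.integrable_comp_iff.2 (hf a b))
      (fun a b => (hpow (k + 1) a b).aestronglyMeasurable)
      (fun a b => .of_forall fun x => (norm_apply_le_l2_opNorm _ a b).trans
        (l2_opNorm_gramResolvent_pow_le (f x) (k + 1)))
    simp only [← conjTranspose_circleBlockToeplitz] at hright
    simpa only [← gramResolvent_pow_succ_sub] using
      ((ih.mul_left fun n => l2_opNorm_gramResolvent_le (circleBlockToeplitz f n)).sub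
        (hleft.mul_left fun n => l2_opNorm_gramResolvent_le (circleBlockToeplitz f n))).sub
        (hright.mul_left fun n => l2_opNorm_gramResolvent_mul_le (circleBlockToeplitz f n))

lemma tendsto_trace_gramResolvent_pow {f : AddCircle T → Matrix ρ τ ℂ}
    (hf : ∀ a b, Integrable (fun x => f x a b) haarAddCircle) (k : ℕ) :
    Tendsto (fun n : ℕ => (n : ℂ)⁻¹ * (gramResolvent (circleBlockToeplitz f n) ^ k).trace) atTop
      (𝓝 (∫ x, (gramResolvent (f x) ^ k).trace ∂haarAddCircle)) := by
  have hmeas : AEStronglyMeasurable f haarAddCircle :=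
    aestronglyMeasurable_of_matrix_apply fun a b => (hf a b).aestronglyMeasurable
  have hsub : (fun n => (gramResolvent (circleBlockToeplitz f n) ^ k -
      circleBlockToeplitz (fun x => gramResolvent (f x) ^ k) n).trace) =o[atTop]
        fun n : ℕ => (n : ℂ) := by
    have hle := Asymptotics.IsBigO.of_norm_le (l := atTop) fun n => norm_trace_le_traceNorm
      (gramResolvent (circleBlockToeplitz f n) ^ k -
        circleBlockToeplitz (fun x => gramResolvent (f x) ^ k) n)
    rw [← Asymptotics.isLittleO_norm_right]
    simpa only [Complex.norm_natCast] using
      hle.trans_isLittleO (isTraceNegligible_gramResolvent_pow_sub hf k)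
  rw [← tendsto_sub_nhds_zero_iff]
  refine hsub.tendsto_div_nhds_zero.congr' ?_
  filter_upwards [eventually_ne_atTop 0] with n hn
  rw [trace_sub, trace_circleBlockToeplitz (integrable_gramResolvent_pow_apply hmeas k)]
  field_simp

end ResolventToeplitz

section GramResolventEigenvalue

open scoped ComplexOrder

variable {m n : Type*} [Fintype m] [Fintype n] [DecidableEq m]

/-- The eigenvalues `(1 + σ²)⁻¹` of the Gram resolvent, where `σ²` runs through the eigenvalues of
`A * Aᴴ` with multiplicity. -/
def gramResolventEigenvalue (A : Matrix m n ℂ) (i : m) : ℝ :=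
  (1 + (isHermitian_mul_conjTranspose_self A).eigenvalues i)⁻¹

lemma one_add_eigenvalues_pos (A : Matrix m n ℂ) (i : m) :
    0 < 1 + (isHermitian_mul_conjTranspose_self A).eigenvalues i :=
  add_pos_of_pos_of_nonneg one_pos ((posSemidef_self_mul_conjTranspose A).eigenvalues_nonneg i)

lemma gramResolventEigenvalue_pos (A : Matrix m n ℂ) (i : m) : 0 < gramResolventEigenvalue A i :=
  inv_pos.2 (one_add_eigenvalues_pos A i)

lemma gramResolventEigenvalue_mem_Icc (A : Matrix m n ℂ) (i : m) :
    gramResolventEigenvalue A i ∈ Set.Icc (0 : ℝ) 1 :=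
  ⟨(gramResolventEigenvalue_pos A i).le, inv_le_one_of_one_le₀ <|
    le_add_of_nonneg_right ((posSemidef_self_mul_conjTranspose A).eigenvalues_nonneg i)⟩

lemma gramResolvent_eq_conjStarAlgAut_diagonal (A : Matrix m n ℂ) :
    gramResolvent A = Unitary.conjStarAlgAut ℂ _
      (isHermitian_mul_conjTranspose_self A).eigenvectorUnitary
      (diagonal fun i => (gramResolventEigenvalue A i : ℂ)) := by
  refine inv_eq_right_inv ?_
  conv_lhs =>
    enter [1]
    rw [(isHermitian_mul_conjTranspose_self A).spectral_theorem,
      ← map_one (Unitary.conjStarAlgAut ℂ _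
        (isHermitian_mul_conjTranspose_self A).eigenvectorUnitary)]
  rw [← map_add, ← map_mul, ← diagonal_one, diagonal_add, diagonal_mul_diagonal]
  have hinv (i : m) : (1 + ((isHermitian_mul_conjTranspose_self A).eigenvalues i : ℂ)) *
      gramResolventEigenvalue A i = 1 := by
    exact_mod_cast mul_inv_cancel₀ (one_add_eigenvalues_pos A i).ne'
  simp only [Function.comp_apply, Complex.coe_algebraMap, hinv, diagonal_one, map_one]

lemma trace_gramResolvent_pow (A : Matrix m n ℂ) (k : ℕ) :
    (gramResolvent A ^ k).trace = ∑ i, (gramResolventEigenvalue A i : ℂ) ^ k := by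
  rw [gramResolvent_eq_conjStarAlgAut_diagonal, ← map_pow, diagonal_pow,
    Unitary.conjStarAlgAut_apply, trace_mul_cycle, Unitary.coe_star_mul_self, Matrix.one_mul,
    trace_diagonal]
  rfl

lemma sum_eval_gramResolventEigenvalue (A : Matrix m n ℂ) (q : Polynomial ℂ) :
    ∑ i, q.eval (gramResolventEigenvalue A i : ℂ) =
      ∑ k ∈ Finset.range (q.natDegree + 1), q.coeff k * (gramResolvent A ^ k).trace := by
  simp only [Polynomial.eval_eq_sum_range, trace_gramResolvent_pow, Finset.mul_sum]
  exact Finset.sum_comm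

lemma norm_sum_gramResolventEigenvalue_le (A : Matrix m n ℂ) {h : ℝ → ℂ} {C : ℝ}
    (hC : ∀ y ∈ Set.Icc (0 : ℝ) 1, ‖h y‖ ≤ C) :
    ‖∑ i, h (gramResolventEigenvalue A i)‖ ≤ Fintype.card m * C := by
  refine (norm_sum_le_of_le _ fun i _ => hC _ (gramResolventEigenvalue_mem_Icc A i)).trans_eq ?_
  rw [Finset.sum_const, nsmul_eq_mul, Finset.card_univ]

lemma tendstoUniformly_sum_gramResolventEigenvalue {β γ : Type*} {p : Filter γ} {ι κ : β → Type*}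
    [∀ b, Fintype (ι b)] [∀ b, Fintype (κ b)] [∀ b, DecidableEq (ι b)]
    (A : ∀ b, Matrix (ι b) (κ b) ℂ) {c : β → ℂ} {K : ℝ} (hc : ∀ b, ‖c b‖ * Fintype.card (ι b) ≤ K)
    {g : γ → ℝ → ℂ} {h : ℝ → ℂ} (hg : TendstoUniformlyOn g h p (Set.Icc 0 1)) :
    TendstoUniformly (fun N b => c b * ∑ i, g N (gramResolventEigenvalue (A b) i))
      (fun b => c b * ∑ i, h (gramResolventEigenvalue (A b) i)) p := by
  rw [Metric.tendstoUniformly_iff]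
  rw [Metric.tendstoUniformlyOn_iff] at hg
  intro ε hε
  filter_upwards [hg (ε / (|K| + 1)) (by positivity)] with N hN b
  have hsum := norm_sum_gramResolventEigenvalue_le (A b) (h := fun y => h y - g N y)
    fun y hy => (dist_eq_norm (h y) (g N y)).symm.trans_le (hN y hy).le
  rw [dist_eq_norm, ← mul_sub, ← Finset.sum_sub_distrib, norm_mul]
  calc ‖c b‖ * ‖∑ i, (h (gramResolventEigenvalue (A b) i) -
          g N (gramResolventEigenvalue (A b) i))‖
      ≤ ‖c b‖ * (Fintype.card (ι b) * (ε / (|K| + 1))) := by gcongr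
    _ ≤ |K| * (ε / (|K| + 1)) := by
        rw [← mul_assoc]
        gcongr
        exact (hc b).trans (le_abs_self K)
    _ < (|K| + 1) * (ε / (|K| + 1)) := by gcongr; exact lt_add_one _
    _ = ε := by field_simp

end GramResolventEigenvalue

section Moments

lemma exists_complex_polynomial_near_of_continuousOn {a b : ℝ} {h : ℝ → ℂ}
    (hh : ContinuousOn h (Set.Icc a b)) {ε : ℝ} (hε : 0 < ε) :
    ∃ q : Polynomial ℂ, ∀ x ∈ Set.Icc a b, ‖h x - q.eval (x : ℂ)‖ < ε := by
  obtain ⟨p, hp⟩ := exists_polynomial_near_of_continuousOn a b (fun x => (h x).re)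
    (Complex.continuous_re.comp_continuousOn hh) (ε / 2) (half_pos hε)
  obtain ⟨r, hr⟩ := exists_polynomial_near_of_continuousOn a b (fun x => (h x).im)
    (Complex.continuous_im.comp_continuousOn hh) (ε / 2) (half_pos hε)
  refine ⟨p.map Complex.ofRealHom + Polynomial.C Complex.I * r.map Complex.ofRealHom,
    fun x hx => ?_⟩
  have heval (s : Polynomial ℝ) : (s.map Complex.ofRealHom).eval (x : ℂ) = (s.eval x : ℝ) :=
    Polynomial.eval_map_apply Complex.ofRealHom x
  rw [Polynomial.eval_add, Polynomial.eval_mul, Polynomial.eval_C, heval, heval]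
  calc ‖h x - (p.eval x + Complex.I * r.eval x)‖
      ≤ |(h x).re - p.eval x| + |(h x).im - r.eval x| := by
        simpa using Complex.norm_le_abs_re_add_abs_im (h x - (p.eval x + Complex.I * r.eval x))
    _ < ε := by
        rw [abs_sub_comm, abs_sub_comm (h x).im]
        linarith [hp x hx, hr x hx]

lemma exists_polynomial_tendstoUniformlyOn {a b : ℝ} {h : ℝ → ℂ}
    (hh : ContinuousOn h (Set.Icc a b)) :
    ∃ q : ℕ → Polynomial ℂ,
      TendstoUniformlyOn (fun N (x : ℝ) => (q N).eval (x : ℂ)) h atTop (Set.Icc a b) := by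
  choose q hq using fun N : ℕ =>
    exists_complex_polynomial_near_of_continuousOn hh (Nat.one_div_pos_of_nat (n := N) (α := ℝ))
  refine ⟨q, Metric.tendstoUniformlyOn_iff.2 fun ε hε => ?_⟩
  filter_upwards [tendsto_one_div_add_atTop_nhds_zero_nat.eventually_lt_const hε] with N hN x hx
  rw [dist_eq_norm]
  exact (hq N x hx).trans hN

variable {α ρ τ : Type*} [Fintype ρ] [Fintype τ] [DecidableEq ρ] {h : ℝ → ℂ}

lemma continuous_sum_gramResolventEigenvalue (hh : ContinuousOn h (Set.Icc 0 1)) :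
    Continuous fun A : Matrix ρ τ ℂ => ∑ i, h (gramResolventEigenvalue A i) := by
  obtain ⟨q, hq⟩ := exists_polynomial_tendstoUniformlyOn hh
  have hlim := tendstoUniformly_sum_gramResolventEigenvalue (fun A : Matrix ρ τ ℂ => A)
    (c := fun _ => 1) (K := Fintype.card ρ) (fun _ => by simp) hq
  simp only [one_mul, sum_eval_gramResolventEigenvalue] at hlim
  refine hlim.continuous (.of_forall fun N => ?_)
  exact continuous_finsetSum _ fun k _ =>
    continuous_const.mul (continuous_gramResolvent.pow k).matrix_trace

variable [MeasurableSpace α] {μ : Measure α} [IsFiniteMeasure μ] {f : α → Matrix ρ τ ℂ}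

lemma integrable_sum_gramResolventEigenvalue (hf : AEStronglyMeasurable f μ)
    (hh : ContinuousOn h (Set.Icc 0 1)) :
    Integrable (fun x => ∑ i, h (gramResolventEigenvalue (f x) i)) μ := by
  obtain ⟨C, hC⟩ := isCompact_Icc.exists_bound_of_continuousOn hh
  exact .of_bound ((continuous_sum_gramResolventEigenvalue hh).comp_aestronglyMeasurable hf) _
    (.of_forall fun x => norm_sum_gramResolventEigenvalue_le (f x) hC)

lemma tendsto_integral_sum_gramResolventEigenvalue (hf : AEStronglyMeasurable f μ)
    {γ : Type*} {p : Filter γ} [p.IsCountablyGenerated] {g : γ → ℝ → ℂ}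
    (hh : ContinuousOn h (Set.Icc 0 1)) (hgc : ∀ N, ContinuousOn (g N) (Set.Icc 0 1))
    (hg : TendstoUniformlyOn g h p (Set.Icc 0 1)) :
    Tendsto (fun N => ∫ x, ∑ i, g N (gramResolventEigenvalue (f x) i) ∂μ) p
      (𝓝 (∫ x, ∑ i, h (gramResolventEigenvalue (f x) i) ∂μ)) := by
  obtain ⟨C, hC⟩ := isCompact_Icc.exists_bound_of_continuousOn hh
  refine tendsto_integral_filter_of_norm_le_const (.of_forall fun N =>
    (integrable_sum_gramResolventEigenvalue hf (hgc N)).aestronglyMeasurable)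
    ⟨Fintype.card ρ * (C + 1), ?_⟩ (.of_forall fun x => ?_)
  · filter_upwards [Metric.tendstoUniformlyOn_iff.1 hg 1 one_pos] with N hN
    refine .of_forall fun x => norm_sum_gramResolventEigenvalue_le (f x) fun y hy => ?_
    have hdist := hN y hy
    rw [dist_comm, dist_eq_norm] at hdist
    linarith [hC y hy, norm_sub_norm_le (g N y) (h y)]
  · exact tendsto_finsetSum _ fun i _ => hg.tendsto_at (gramResolventEigenvalue_mem_Icc (f x) i)

lemma tendsto_sum_eval_gramResolventEigenvalue (hf : AEStronglyMeasurable f μ)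
    {β : Type*} {l : Filter β} {ι κ : β → Type*} [∀ b, Fintype (ι b)] [∀ b, Fintype (κ b)]
    [∀ b, DecidableEq (ι b)] {A : ∀ b, Matrix (ι b) (κ b) ℂ} {c : β → ℂ}
    (htrace : ∀ k : ℕ, Tendsto (fun b => c b * (gramResolvent (A b) ^ k).trace) l
      (𝓝 (∫ x, (gramResolvent (f x) ^ k).trace ∂μ))) (q : Polynomial ℂ) :
    Tendsto (fun b => c b * ∑ i, q.eval (gramResolventEigenvalue (A b) i : ℂ)) l
      (𝓝 (∫ x, ∑ i, q.eval (gramResolventEigenvalue (f x) i : ℂ) ∂μ)) := by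
  have hint (k : ℕ) : Integrable (fun x => q.coeff k * (gramResolvent (f x) ^ k).trace) μ :=
    (integrable_finsetSum _ fun a _ => integrable_gramResolvent_pow_apply hf k a a).const_mul _
  simp only [sum_eval_gramResolventEigenvalue, Finset.mul_sum]
  rw [integral_finsetSum _ fun k _ => hint k]
  refine tendsto_finsetSum _ fun k _ => ?_
  simpa only [integral_const_mul, mul_left_comm] using (htrace k).const_mul (q.coeff k)

lemma tendsto_sum_gramResolventEigenvalue_of_tendsto_trace (hf : AEStronglyMeasurable f μ)
    {β : Type*} {l : Filter β} {ι κ : β → Type*} [∀ b, Fintype (ι b)] [∀ b, Fintype (κ b)]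
    [∀ b, DecidableEq (ι b)] {A : ∀ b, Matrix (ι b) (κ b) ℂ} {c : β → ℂ} {K : ℝ}
    (hc : ∀ b, ‖c b‖ * Fintype.card (ι b) ≤ K)
    (htrace : ∀ k : ℕ, Tendsto (fun b => c b * (gramResolvent (A b) ^ k).trace) l
      (𝓝 (∫ x, (gramResolvent (f x) ^ k).trace ∂μ))) (hh : ContinuousOn h (Set.Icc 0 1)) :
    Tendsto (fun b => c b * ∑ i, h (gramResolventEigenvalue (A b) i)) l
      (𝓝 (∫ x, ∑ i, h (gramResolventEigenvalue (f x) i) ∂μ)) := by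
  obtain ⟨q, hq⟩ := exists_polynomial_tendstoUniformlyOn hh
  exact (tendstoUniformly_sum_gramResolventEigenvalue A hc hq).tendsto_of_eventually_tendsto
    (.of_forall fun N => tendsto_sum_eval_gramResolventEigenvalue hf htrace (q N))
    (tendsto_integral_sum_gramResolventEigenvalue hf hh (fun N => by fun_prop) hq)

end Moments

section SingularValues

/-- The test function of the Gram resolvent eigenvalue `y = (1 + σ²)⁻¹` that corresponds to the
test function `F` of the singular value `σ`. The value at `y = 0` is the limit for `σ → ∞` when `F`
vanishes at infinity. -/
def resolventTest (F : ℝ → ℂ) : ℝ → ℂ :=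
  Function.update (fun y => F (√(y⁻¹ - 1))) 0 0

lemma continuousOn_resolventTest {F : ℝ → ℂ} (hF : Continuous F) (h0 : Tendsto F atTop (𝓝 0)) :
    ContinuousOn (resolventTest F) (Set.Ici 0) := by
  have hpos : Set.Ici (0 : ℝ) \ {0} = Set.Ioi 0 := Set.Ici_sdiff_left
  refine continuousOn_update_iff.2 ⟨?_, fun _ => ?_⟩
  · rw [hpos]
    exact hF.comp_continuousOn
      ((continuousOn_inv₀.mono fun y hy => ne_of_gt hy).sub continuousOn_const).sqrt
  · rw [hpos]
    exact h0.comp (Real.tendsto_sqrt_atTop.comp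
      (tendsto_atTop_add_const_right _ _ tendsto_inv_nhdsGT_zero))

variable {m n : Type*} [Fintype m] [Fintype n] [DecidableEq m]

lemma resolventTest_gramResolventEigenvalue (F : ℝ → ℂ) (A : Matrix m n ℂ) (i : m) :
    resolventTest F (gramResolventEigenvalue A i) =
      F √((isHermitian_mul_conjTranspose_self A).eigenvalues i) := by
  rw [resolventTest, Function.update_of_ne (gramResolventEigenvalue_pos A i).ne',
    gramResolventEigenvalue, inv_inv, add_sub_cancel_left]

lemma svSum_eq_sum_resolventTest (F : ℝ → ℂ) (A : Matrix m n ℂ) :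
    svSum F A = ∑ i, resolventTest F (gramResolventEigenvalue A i) -
      ((Fintype.card m - min (Fintype.card m) (Fintype.card n) : ℕ) : ℂ) * F 0 := by
  simp only [svSum, resolventTest_gramResolventEigenvalue]

lemma integral_svSum {α : Type*} [MeasurableSpace α] {μ : Measure α} [IsProbabilityMeasure μ]
    {f : α → Matrix m n ℂ} (hf : AEStronglyMeasurable f μ) {F : ℝ → ℂ}
    (hF : ContinuousOn (resolventTest F) (Set.Icc 0 1)) :
    ∫ x, svSum F (f x) ∂μ = ∫ x, ∑ i, resolventTest F (gramResolventEigenvalue (f x) i) ∂μ -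
      ((Fintype.card m - min (Fintype.card m) (Fintype.card n) : ℕ) : ℂ) * F 0 := by
  simp only [svSum_eq_sum_resolventTest]
  rw [integral_sub (integrable_sum_gramResolventEigenvalue hf hF) (integrable_const _),
    integral_const, probReal_univ, one_smul]

end SingularValues

section CircleDistribution

open AddCircle

variable {T : ℝ} [hT : Fact (0 < T)]

lemma inv_volume_mul_setIntegral_univ (g : AddCircle T → ℂ) :
    ((volume (Set.univ : Set (AddCircle T))).toReal : ℂ)⁻¹ * ∫ x in Set.univ, g x =
      ∫ x, g x ∂haarAddCircle := by
  rw [setIntegral_univ, AddCircle.measure_univ, ENNReal.toReal_ofReal hT.out.le,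
    AddCircle.integral_haarAddCircle, Complex.real_smul, Complex.ofReal_inv]

variable {ρ τ : Type} [Fintype ρ] [Fintype τ] [DecidableEq ρ]

theorem distributedSV_circleBlockToeplitz {f : AddCircle T → Matrix ρ τ ℂ}
    (hf : ∀ a b, Integrable (fun x => f x a b) haarAddCircle) :
    DistributedSV Set.univ f fun n => circleBlockToeplitz f n := by
  intro F hF hsupp
  have hcont : ContinuousOn (resolventTest F) (Set.Icc 0 1) :=
    (continuousOn_resolventTest hF
      (hsupp.is_zero_at_infty.mono_left atTop_le_cocompact)).mono Set.Icc_subset_Ici_self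
  have hmeas : AEStronglyMeasurable f haarAddCircle :=
    aestronglyMeasurable_of_matrix_apply fun a b => (hf a b).aestronglyMeasurable
  have hcard (n : ℕ) : ‖(n : ℂ)⁻¹‖ * Fintype.card (Fin n × ρ) ≤ Fintype.card ρ := by
    rw [Fintype.card_prod, Fintype.card_fin, norm_inv, Complex.norm_natCast, Nat.cast_mul,
      ← mul_assoc]
    exact mul_le_of_le_one_left (Nat.cast_nonneg _) inv_mul_le_one
  have hlim := tendsto_sum_gramResolventEigenvalue_of_tendsto_trace hmeas hcard
    (tendsto_trace_gramResolvent_pow hf) hcont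
  rw [inv_volume_mul_setIntegral_univ, integral_const_mul, integral_svSum hmeas hcont]
  refine ((hlim.sub_const _).const_mul _).congr' ?_
  filter_upwards [eventually_ne_atTop 0] with n hn
  simp only [svSum_eq_sum_resolventTest, Fintype.card_prod, Fintype.card_fin,
    Nat.mul_min_mul_left, ← Nat.mul_sub, Nat.cast_mul]
  field_simp

end CircleDistribution

section Interval

open AddCircle

variable {T : ℝ} [hT : Fact (0 < T)] {a : ℝ} {ρ τ : Type*} {f : ℝ → Matrix ρ τ ℂ}

lemma integrable_liftIoc_haarAddCircle {g : ℝ → ℂ}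
    (hg : IntervalIntegrable g volume a (a + T)) :
    Integrable (liftIoc T a g) haarAddCircle := by
  rw [← memLp_one_iff_integrable, memLp_haarAddCircle_iff]
  refine MemLp.memLp_liftIoc (memLp_one_iff_integrable.2 ?_)
  exact (intervalIntegrable_iff_integrableOn_Ioc_of_le (by linarith [hT.out])).1 hg

lemma DistributedSV.of_liftIoc [Fintype ρ] [Fintype τ] [DecidableEq ρ] {ι κ : ℕ → Type}
    [∀ n, Fintype (ι n)] [∀ n, Fintype (κ n)] [∀ n, DecidableEq (ι n)]
    {A : ∀ n, Matrix (ι n) (κ n) ℂ} (h : DistributedSV Set.univ (liftIoc T a f) A) :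
    DistributedSV (Set.Icc a (a + T)) f A := by
  intro F hF hsupp
  have hle : a ≤ a + T := le_add_of_nonneg_right hT.out.le
  have hlim := h F hF hsupp
  rw [setIntegral_univ, AddCircle.measure_univ] at hlim
  rw [integral_Icc_eq_integral_Ioc, ← intervalIntegral.integral_of_le hle, Real.volume_Icc,
    add_sub_cancel_left, ← integral_liftIoc_eq_intervalIntegral]
  exact hlim

lemma neg_pi_add_two_pi : -π + 2 * π = π := by ring

lemma fCoeff_apply_eq_fourierCoeff [Fact (0 < 2 * π)] (f : ℝ → Matrix ρ τ ℂ) (k : ℤ)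
    (i : ρ) (j : τ) :
    fCoeff f k i j = fourierCoeff (fun x => liftIoc (2 * π) (-π) f x i j) k := by
  have hexp (θ : ℝ) :
      fourier (-k) (θ : AddCircle (2 * π)) = Complex.exp (-(Complex.I * k * θ)) := by
    rw [fourier_coe_apply]
    congr 1
    push_cast
    field_simp
  have hcoeff := fourierCoeff_liftIoc_eq (T := 2 * π) (a := -π) (fun θ => f θ i j) k
  rw [fourierCoeffOn_eq_integral, add_sub_cancel_left] at hcoeff
  refine Eq.trans ?_ hcoeff.symm
  rw [neg_pi_add_two_pi]
  simp only [fCoeff, of_apply, hexp, smul_eq_mul, Complex.real_smul, one_div, Complex.ofReal_inv,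
    mul_comm (f _ i j)]

lemma blockToeplitz_eq_circleBlockToeplitz [Fact (0 < 2 * π)] (f : ℝ → Matrix ρ τ ℂ) (n : ℕ) :
    blockToeplitz f n n = circleBlockToeplitz (liftIoc (2 * π) (-π) f) n := by
  ext p q
  exact fCoeff_apply_eq_fourierCoeff f _ p.2 q.2

end Interval

theorem toeplitz_sv_distribution_general {ρ τ : Type} [Fintype ρ] [Fintype τ] [DecidableEq ρ]
    {f : ℝ → Matrix ρ τ ℂ} (hf : ∀ i j, IntervalIntegrable (fun θ => f θ i j) volume (-π) π) :
    DistributedSV (Set.Icc (-π) π) f fun n => blockToeplitz f n n := by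
  have hpos : Fact (0 < 2 * π) := ⟨Real.two_pi_pos⟩
  have hint (i : ρ) (j : τ) : Integrable (fun x => AddCircle.liftIoc (2 * π) (-π) f x i j)
      AddCircle.haarAddCircle :=
    integrable_liftIoc_haarAddCircle (g := fun θ => f θ i j)
      (by simpa only [neg_pi_add_two_pi] using hf i j)
  have hdist := (distributedSV_circleBlockToeplitz hint).of_liftIoc
  simpa only [blockToeplitz_eq_circleBlockToeplitz, neg_pi_add_two_pi] using hdist

/-- Szegő-type singular value distribution for block Toeplitz
matrices: if `f ∈ L¹([-π,π]; ℂ^{s×t})` then `{T_n(f)}_n ∼_σ f`. -/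
theorem toeplitz_sv_distribution
    (s t : ℕ) (f : ℝ → Matrix (Fin s) (Fin t) ℂ)
    (hf : ∀ i j, IntervalIntegrable (fun θ => f θ i j) volume (-π) π) :
    DistributedSV (Set.Icc (-π) π) f (fun n => blockToeplitz f n n) :=
  toeplitz_sv_distribution_general hf

end
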